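/- arXiv:2303.03970 — 8 statements merged into one kernel-verified Lean document; each statement's English description precedes it below -/
import Mathlib

section
/- The lattice of normal subobjects of any preordered group is modular: for any preordered group (G, P_G) and normal subgroups A, B, C of G with C ⊆ A, one has A ∩ (B·C) = (A ∩ B)·C and (A ∩ (B·C)) ∩ P_G = ((A ∩ B)·C) ∩ P_G, i.e. the normal subobjects (A ∩ (B·C), A ∩ (B·C) ∩ P_G) and ((A ∩ B)·C, ((A ∩ B)·C) ∩ P_G) coincide. -/
open scoped Pointwise

theorem ofPred_exists_eq_mul {M : Type*} [Mul M] (S T : Set M) :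
    {x | ∃ s ∈ S, ∃ t ∈ T, x = s * t} = S * T := by
  ext x
  simp only [Set.mem_ofPred_eq, Set.mem_mul, eq_comm]

theorem stmt2_general {G : Type*} [Group G] (P : Set G) (A B C : Subgroup G) (hCA : C ≤ A) :
    (A : Set G) ∩ {x | ∃ b ∈ B, ∃ c ∈ C, x = b * c} =
        {x | ∃ d, (d ∈ A ∧ d ∈ B) ∧ ∃ c ∈ C, x = d * c} ∧
      ((A : Set G) ∩ {x | ∃ b ∈ B, ∃ c ∈ C, x = b * c}) ∩ P =
        {x | ∃ d, (d ∈ A ∧ d ∈ B) ∧ ∃ c ∈ C, x = d * c} ∩ P := by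
  have modular_law := calc
    (A : Set G) ∩ {x | ∃ b ∈ B, ∃ c ∈ C, x = b * c}
    _ = (A : Set G) ∩ (B * C) := congrArg _ (ofPred_exists_eq_mul (B : Set G) C)
    _ = ((A ⊓ B : Subgroup G) : Set G) * C := (Subgroup.inf_mul_assoc A B C hCA).symm
    _ = {x | ∃ d, (d ∈ A ∧ d ∈ B) ∧ ∃ c ∈ C, x = d * c} :=
      (ofPred_exists_eq_mul ((A ⊓ B : Subgroup G) : Set G) C).symm
  exact ⟨modular_law, congrArg (· ∩ P) modular_law⟩

/-- The lattice of normal subobjects of a preordered group is modular: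
for normal subgroups `A`, `B`, `C` of `G` with `C ⊆ A`, one has
`A ∩ (B·C) = (A ∩ B)·C`, together with the corresponding equality of the
intersections with the positive cone `P`. -/
theorem stmt2 {G : Type*} [Group G]
    (P : Submonoid G) (hP : ∀ g : G, ∀ p ∈ P, g * p * g⁻¹ ∈ P)
    (A B C : Subgroup G) (hA : A.Normal) (hB : B.Normal) (hC : C.Normal)
    (hCA : C ≤ A) :
    (A : Set G) ∩ {x | ∃ b ∈ B, ∃ c ∈ C, x = b * c} =
        {x | ∃ d, (d ∈ A ∧ d ∈ B) ∧ ∃ c ∈ C, x = d * c} ∧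
      ((A : Set G) ∩ {x | ∃ b ∈ B, ∃ c ∈ C, x = b * c}) ∩ (P : Set G) =
        {x | ∃ d, (d ∈ A ∧ d ∈ B) ∧ ∃ c ∈ C, x = d * c} ∩ (P : Set G) :=
  stmt2_general P A B C hCA
end

section
/- Let (G, P_G) be a preordered group, A an abelian group, Q ⊆ A a submonoid, and φ : A → G/[G,G] a surjective group homomorphism with φ(Q) = η_G(P_G). Let P' = {(g,a) ∈ G × A : η_G(g) = φ(a)} be the pullback group, with second projection π₂ : P' → A. Then the commutator subgroup [P',P'] equals Ker(π₂) = {(c,1) : c ∈ [G,G]}; consequently π₂ induces a group isomorphism P'/[P',P'] ≅ A which carries the image in P'/[P',P'] of the cone P'⁺ = {(p,q) : p ∈ P_G, q ∈ Q, η_G(p) = φ(q)} onto Q. (This is the admissibility of the reflection of preordered groups onto preordered abelian groups, applied to this pullback.) -/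
/-- The pullback of two group homomorphisms `φ : G →* K` and `ψ : A →* K`,
as a subgroup of `G × A`. -/
def pullbackSubgroup {G A K : Type*} [Group G] [Group A] [Group K]
    (φ : G →* K) (ψ : A →* K) : Subgroup (G × A) where
  carrier := {x | φ x.1 = ψ x.2}
  one_mem' := by simp
  mul_mem' := by
    intro a b ha hb
    simp only [Set.mem_setOf_eq, Prod.fst_mul, Prod.snd_mul, map_mul] at *
    rw [ha, hb]
  inv_mem' := by
    intro a ha
    simp only [Set.mem_setOf_eq, Prod.fst_inv, Prod.snd_inv, map_inv] at *
    rw [ha]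

/-- The positive cone of a subgroup `S ≤ G × A` induced by positive cones
`P ⊆ G` and `Q ⊆ A`: the submonoid of elements of `S` whose two components
are positive. -/
def subCone {G A : Type*} [Group G] [Group A] (S : Subgroup (G × A))
    (P : Submonoid G) (Q : Submonoid A) : Submonoid S where
  carrier := {x | (x : G × A).1 ∈ P ∧ (x : G × A).2 ∈ Q}
  one_mem' := ⟨P.one_mem, Q.one_mem⟩
  mul_mem' := fun ha hb => ⟨P.mul_mem ha.1 hb.1, Q.mul_mem ha.2 hb.2⟩

/-!
As `φ` is surjective, so is the first projection `π₁`, which therefore carries `[P', P']` onto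
`[G, G]`. Now `Ker π₂` contains `[P', P']`, because `A` is abelian, while `π₁` is injective on
`Ker π₂` and maps it into `Ker η_G = [G, G]`. Hence `[P', P']` is all of `Ker π₂`.
-/

section Abelianization

variable {H A : Type*} [Group H] [Group A]

/-- The isomorphism `H / [H, H] ≃* A` induced by a surjective homomorphism `h : H →* A` whose kernel
is `[H, H]`, which exhibits `A` as the abelianization of `H`. -/
noncomputable def abelianizationEquivOfKerEq (h : H →* A) (hker : commutator H = h.ker)
    (hsurj : Function.Surjective h) : Abelianization H ≃* A :=
  (QuotientGroup.quotientMulEquivOfEq hker).trans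
    (QuotientGroup.quotientKerEquivOfSurjective h hsurj)

theorem abelianizationEquivOfKerEq_comp_of (h : H →* A) (hker : commutator H = h.ker)
    (hsurj : Function.Surjective h) :
    (abelianizationEquivOfKerEq h hker hsurj).toMonoidHom.comp Abelianization.of = h :=
  rfl

end Abelianization

namespace pullbackSubgroup

section Group

variable {G A K : Type*} [Group G] [Group A] [Group K]

/-- The first projection `π₁` of the pullback of `f` and `ψ`. -/
abbrev fst (f : G →* K) (ψ : A →* K) : pullbackSubgroup f ψ →* G :=
  (MonoidHom.fst G A).comp (pullbackSubgroup f ψ).subtype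

/-- The second projection `π₂` of the pullback of `f` and `ψ`. -/
abbrev snd (f : G →* K) (ψ : A →* K) : pullbackSubgroup f ψ →* A :=
  (MonoidHom.snd G A).comp (pullbackSubgroup f ψ).subtype

variable {f : G →* K} {ψ : A →* K}

theorem map_fst_eq_map_snd (x : pullbackSubgroup f ψ) : f (fst f ψ x) = ψ (snd f ψ x) :=
  x.2

theorem fst_surjective (h : f.range ≤ ψ.range) : Function.Surjective (fst f ψ) := by
  intro g
  obtain ⟨a, ha⟩ := h ⟨g, rfl⟩
  exact ⟨⟨(g, a), ha.symm⟩, rfl⟩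

theorem snd_surjective (h : ψ.range ≤ f.range) : Function.Surjective (snd f ψ) := by
  intro a
  obtain ⟨g, hg⟩ := h ⟨a, rfl⟩
  exact ⟨⟨(g, a), hg⟩, rfl⟩

theorem fst_mem_ker_of_mem_ker_snd {x : pullbackSubgroup f ψ} (hx : x ∈ (snd f ψ).ker) :
    fst f ψ x ∈ f.ker := by
  rw [MonoidHom.mem_ker, map_fst_eq_map_snd, MonoidHom.mem_ker.1 hx, map_one]

theorem fst_injOn_ker_snd : Set.InjOn (fst f ψ) (snd f ψ).ker := fun _ hx _ hy hxy =>
  Subtype.ext (Prod.ext hxy (hx.trans hy.symm))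

theorem map_fst_commutator (h : f.range ≤ ψ.range) :
    (commutator (pullbackSubgroup f ψ)).map (fst f ψ) = commutator G := by
  rw [map_commutator_eq, MonoidHom.range_eq_top.2 (fst_surjective h), commutator_def]

theorem map_snd_subCone (P : Submonoid G) (Q : Submonoid A) :
    (subCone (pullbackSubgroup f ψ) P Q).map (snd f ψ) = Q ⊓ (P.map f).comap ψ := by
  ext q
  constructor
  · rintro ⟨x, ⟨hxP, hxQ⟩, rfl⟩
    exact ⟨hxQ, fst f ψ x, hxP, map_fst_eq_map_snd x⟩
  · rintro ⟨hq, p, hp, hpq⟩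
    exact ⟨⟨(p, q), hpq⟩, ⟨hp, hq⟩, rfl⟩

end Group

section CommGroup

variable {G A K : Type*} [Group G] [CommGroup A] [Group K] {f : G →* K} {ψ : A →* K}

theorem commutator_eq_ker_snd (hf : f.ker ≤ commutator G) (h : f.range ≤ ψ.range) :
    commutator (pullbackSubgroup f ψ) = (snd f ψ).ker := by
  have hle : commutator (pullbackSubgroup f ψ) ≤ (snd f ψ).ker :=
    Abelianization.commutator_subset_ker (snd f ψ)
  refine le_antisymm hle fun x hx => ?_
  have hx₁ : fst f ψ x ∈ (commutator (pullbackSubgroup f ψ)).map (fst f ψ) := by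
    rw [map_fst_commutator h]
    exact hf (fst_mem_ker_of_mem_ker_snd hx)
  obtain ⟨y, hy, hyx⟩ := hx₁
  rwa [← fst_injOn_ker_snd (hle hy) hx hyx]

end CommGroup

end pullbackSubgroup

open pullbackSubgroup in
theorem stmt3_general {G A K : Type*} [Group G] [CommGroup A] [Group K]
    (P : Submonoid G) (Q : Submonoid A) (f : G →* K) (ψ : A →* K)
    (hf : f.ker ≤ commutator G) (hrange : f.range = ψ.range) (hQ : Q.map ψ ≤ P.map f) :
    commutator (pullbackSubgroup f ψ) = (snd f ψ).ker ∧
      (∀ x : pullbackSubgroup f ψ,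
        x ∈ (snd f ψ).ker ↔ (x : G × A).2 = 1 ∧ (x : G × A).1 ∈ commutator G) ∧
      ∃ e : Abelianization (pullbackSubgroup f ψ) ≃* A,
        (∀ x : pullbackSubgroup f ψ, e (Abelianization.of x) = (x : G × A).2) ∧
        ((subCone (pullbackSubgroup f ψ) P Q).map Abelianization.of).map e.toMonoidHom = Q := by
  have hker := commutator_eq_ker_snd hf hrange.le
  have hsurj := snd_surjective hrange.ge
  refine ⟨hker, fun x => ⟨fun hx => ⟨hx, hf (fst_mem_ker_of_mem_ker_snd hx)⟩, And.left⟩,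
    abelianizationEquivOfKerEq _ hker hsurj,
    DFunLike.congr_fun (abelianizationEquivOfKerEq_comp_of _ hker hsurj), ?_⟩
  rw [Submonoid.map_map, abelianizationEquivOfKerEq_comp_of, map_snd_subCone]
  exact inf_eq_left.2 (Submonoid.map_le_iff_le_comap.1 hQ)

/-- admissibility of the reflection of preordered groups onto preordered
abelian groups.  For a preordered group `(G, P)`, an abelian group `A` with submonoid `Q`,
and a surjective homomorphism `φ : A →* G/[G,G]` with `φ(Q) = η_G(P)`, the pullback
group `P' = {(g,a) | η_G g = φ a}` has `[P',P'] = Ker(π₂) = {(c,1) | c ∈ [G,G]}`, and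
`π₂` induces an isomorphism `P'/[P',P'] ≅ A` carrying the image of the cone `P'⁺`
onto `Q`. -/
theorem stmt3 {G A : Type*} [Group G] [CommGroup A]
    (P : Submonoid G) (hP : ∀ g : G, ∀ p ∈ P, g * p * g⁻¹ ∈ P)
    (Q : Submonoid A) (φ : A →* Abelianization G)
    (hφsurj : Function.Surjective φ)
    (hφQ : Submonoid.map φ Q = Submonoid.map (Abelianization.of (G := G)) P) :
    commutator ↥(pullbackSubgroup (Abelianization.of (G := G)) φ) =
        ((MonoidHom.snd G A).comp
          (pullbackSubgroup (Abelianization.of (G := G)) φ).subtype).ker ∧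
      (∀ x : ↥(pullbackSubgroup (Abelianization.of (G := G)) φ),
        x ∈ ((MonoidHom.snd G A).comp
            (pullbackSubgroup (Abelianization.of (G := G)) φ).subtype).ker ↔
          ((x : G × A).2 = 1 ∧ (x : G × A).1 ∈ commutator G)) ∧
      ∃ e : Abelianization ↥(pullbackSubgroup (Abelianization.of (G := G)) φ) ≃* A,
        (∀ x : ↥(pullbackSubgroup (Abelianization.of (G := G)) φ),
          e (Abelianization.of x) = (x : G × A).2) ∧
        Submonoid.map e.toMonoidHom
            (Submonoid.map Abelianization.of
              (subCone (pullbackSubgroup (Abelianization.of (G := G)) φ) P Q)) = Q := by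
  have hrange : (Abelianization.of (G := G)).range = φ.range :=
    (MonoidHom.range_eq_top.2 QuotientGroup.mk_surjective).trans
      (MonoidHom.range_eq_top.2 hφsurj).symm
  exact stmt3_general P Q _ φ (Abelianization.ker_of G).le hrange hφQ.le
end

section
/- Let f : (G, P_G) → (H, P_H) and p : (E, P_E) → (H, P_H) be regular epimorphisms of preordered groups, and form their pullback: the group P = {(e,g) ∈ E × G : p(e) = f(g)} with positive cone P⁺ = {(e,g) : e ∈ P_E, g ∈ P_G, p(e) = f(g)}, and first projection π₁ : (P, P⁺) → (E, P_E). If Condition (⋆) holds for f, then Condition (⋆) holds for π₁. -/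
/-- Condition (⋆) for a morphism of preordered groups `f : (G, P) → (H, P_H)`:
for all `a, b, c ∈ P` with `a·b⁻¹ ∈ [G,G]` and `f b = f c`, one has `a·b⁻¹·c ∈ P`. -/
def StarCond {G H : Type*} [Group G] [Group H] (P : Submonoid G) (f : G →* H) : Prop :=
  ∀ a b c : G, a ∈ P → b ∈ P → c ∈ P → a * b⁻¹ ∈ commutator G → f b = f c →
    a * b⁻¹ * c ∈ P

/-!
The positive cone of the pullback is the intersection of the preimages of `P_E` under `π₁` and of
`P_G` under `π₂`, and Condition (⋆) for `π₁` can be checked on each separately. For the first,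
`π₁ b = π₁ c` gives `π₁ (a * b⁻¹ * c) = π₁ a`. For the second, Condition (⋆) for `f` pulls back to
Condition (⋆) for `f ∘ π₂ = p ∘ π₁`, and elements identified by `π₁` are identified by `p ∘ π₁`.
-/

theorem map_mem_commutator {G K : Type*} [Group G] [Group K] (φ : G →* K) {x : G}
    (hx : x ∈ commutator G) : φ x ∈ commutator K := by
  have hle : (commutator G).map φ ≤ commutator K := by
    rw [map_commutator_eq, commutator_def]
    exact Subgroup.commutator_mono le_top le_top
  exact hle (Subgroup.mem_map_of_mem φ hx)

namespace StarCond

variable {G H K : Type*} [Group G] [Group H] [Group K]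

theorem comap_self (P : Submonoid H) (f : G →* H) : StarCond (P.comap f) f := by
  intro a b c ha _ _ _ hbc
  have hfabc : f (a * b⁻¹ * c) = f a := by
    rw [map_mul, map_mul, map_inv, hbc, inv_mul_cancel_right]
  rwa [Submonoid.mem_comap, hfabc]

theorem comap {P : Submonoid G} {f : G →* H} (hf : StarCond P f) (φ : K →* G) :
    StarCond (P.comap φ) (f.comp φ) := by
  intro a b c ha hb hc hab hbc
  have hφab : φ a * (φ b)⁻¹ ∈ commutator G := by
    simpa only [map_mul, map_inv] using map_mem_commutator φ hab
  simpa only [Submonoid.mem_comap, map_mul, map_inv] using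
    hf (φ a) (φ b) (φ c) ha hb hc hφab hbc

theorem of_comp {P : Submonoid G} {f : G →* H} {g : H →* K} (hgf : StarCond P (g.comp f)) :
    StarCond P f :=
  fun a b c ha hb hc hab hbc => hgf a b c ha hb hc hab (congrArg g hbc)

theorem inf {P Q : Submonoid G} {f : G →* H} (hP : StarCond P f) (hQ : StarCond Q f) :
    StarCond (P ⊓ Q) f :=
  fun a b c ha hb hc hab hbc =>
    ⟨hP a b c ha.1 hb.1 hc.1 hab hbc, hQ a b c ha.2 hb.2 hc.2 hab hbc⟩

end StarCond

theorem subCone_eq_comap_inf_comap {G A : Type*} [Group G] [Group A] (S : Subgroup (G × A))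
    (P : Submonoid G) (Q : Submonoid A) :
    subCone S P Q =
      P.comap ((MonoidHom.fst G A).comp S.subtype) ⊓ Q.comap ((MonoidHom.snd G A).comp S.subtype) :=
  rfl

theorem comp_fst_pullbackSubgroup_eq_comp_snd {G A K : Type*} [Group G] [Group A] [Group K]
    (φ : G →* K) (ψ : A →* K) :
    φ.comp ((MonoidHom.fst G A).comp (pullbackSubgroup φ ψ).subtype) =
      ψ.comp ((MonoidHom.snd G A).comp (pullbackSubgroup φ ψ).subtype) :=
  MonoidHom.ext fun x => x.2

theorem stmt4_general {G H E : Type*} [Group G] [Group H] [Group E]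
    (PG : Submonoid G) (PE : Submonoid E) (f : G →* H) (p : E →* H) (hstar : StarCond PG f) :
    StarCond (subCone (pullbackSubgroup p f) PE PG)
      ((MonoidHom.fst E G).comp (pullbackSubgroup p f).subtype) := by
  set π₁ := (MonoidHom.fst E G).comp (pullbackSubgroup p f).subtype
  set π₂ := (MonoidHom.snd E G).comp (pullbackSubgroup p f).subtype
  have hsquare : p.comp π₁ = f.comp π₂ := comp_fst_pullbackSubgroup_eq_comp_snd p f
  have hE : StarCond (PE.comap π₁) π₁ := .comap_self PE π₁
  have hG : StarCond (PG.comap π₂) π₁ := by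
    have hcomp : StarCond (PG.comap π₂) (p.comp π₁) := hsquare ▸ hstar.comap π₂
    exact hcomp.of_comp
  rw [subCone_eq_comap_inf_comap]
  exact hE.inf hG

/-- Condition (⋆) is stable under pullback: if `f : (G,P_G) → (H,P_H)` and
`p : (E,P_E) → (H,P_H)` are regular epimorphisms of preordered groups and Condition (⋆)
holds for `f`, then it holds for the first projection `π₁` of their pullback. -/
theorem stmt4 {G H E : Type*} [Group G] [Group H] [Group E]
    (PG : Submonoid G) (hPG : ∀ g : G, ∀ x ∈ PG, g * x * g⁻¹ ∈ PG)
    (PH : Submonoid H) (hPH : ∀ h : H, ∀ x ∈ PH, h * x * h⁻¹ ∈ PH)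
    (PE : Submonoid E) (hPE : ∀ e : E, ∀ x ∈ PE, e * x * e⁻¹ ∈ PE)
    (f : G →* H) (hfsurj : Function.Surjective f) (hfcone : Submonoid.map f PG = PH)
    (p : E →* H) (hpsurj : Function.Surjective p) (hpcone : Submonoid.map p PE = PH)
    (hstar : StarCond PG f) :
    StarCond (subCone (pullbackSubgroup p f) PE PG)
      ((MonoidHom.fst E G).comp (pullbackSubgroup p f).subtype) :=
  stmt4_general PG PE f p hstar
end

section
/- Let f : (G, P_G) → (H, P_H) be a regular epimorphism of preordered groups. The following are equivalent: (1) Ker(f) ⊆ Z(G) (the center of G) and Condition (⋆) holds for f; (2) f is a normal extension with respect to the reflection of preordered groups onto preordered abelian groups, explicitly: (a) the group homomorphism θ : Eq(f) → {(g,u) ∈ G × Ab(Eq(f)) : η_G(g) = Ab(π₁)(u)} defined by θ(x,y) = (x, η_{Eq(f)}(x,y)) is bijective, and (b) θ restricts to a bijection from Eq(f)⁺ onto {(g,u) : g ∈ P_G, u ∈ η_{Eq(f)}(Eq(f)⁺), η_G(g) = Ab(π₁)(u)}. -/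
/-- The kernel pair `Eq(f) = {(x,y) | f x = f y}` of `f : G →* H`. -/
def kerPair {G H : Type*} [Group G] [Group H] (f : G →* H) : Subgroup (G × G) :=
  pullbackSubgroup f f

/-- The positive cone `Eq(f)⁺` of the kernel pair of a morphism of preordered
groups `f : (G,P) → (H,P_H)`. -/
def kerPairCone {G H : Type*} [Group G] [Group H] (f : G →* H) (P : Submonoid G) :
    Submonoid ↥(kerPair f) :=
  subCone (kerPair f) P P

/-- The first projection `π₁ : Eq(f) →* G` of the kernel pair of `f`. -/
def kerPairFst {G H : Type*} [Group G] [Group H] (f : G →* H) : ↥(kerPair f) →* G :=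
  (MonoidHom.fst G G).comp (kerPair f).subtype

/-- The comparison map `θ : Eq(f) →* G × Ab(Eq(f))`, `θ(x,y) = (x, η(x,y))`,
towards the pullback of `η_G` and `Ab(π₁)`. -/
def thetaMap {G H : Type*} [Group G] [Group H] (f : G →* H) :
    ↥(kerPair f) →* G × Abelianization ↥(kerPair f) :=
  (kerPairFst f).prod Abelianization.of

/-!
The map `θ` compares `π₁` with the pullback of `Ab(π₁)` along `η_G`, so its image is the whole
pullback as soon as `π₁` is surjective, and its kernel is `Ker π₁ ∩ [Eq(f), Eq(f)]`. Since `π₁` is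
split by the diagonal, this intersection is trivial exactly when `Ker π₁`, equivalently `Ker f`, is
central. In that case a point `(a, η(b, c))` of the pullback has `(a, a·b⁻¹·c)` as its unique
preimage under `θ`, so the surjectivity of `θ` on positive cones is Condition (⋆).
-/

section Commutator

open scoped commutatorElement

variable {G K : Type*} [Group G] [Group K]

theorem abelianization_of_eq_iff_mul_inv_mem {a b : G} :
    Abelianization.of a = Abelianization.of b ↔ a * b⁻¹ ∈ commutator G := by
  rw [← Abelianization.ker_of, MonoidHom.mem_ker, map_mul, map_inv, mul_inv_eq_one]

theorem map_commutator_le (φ : G →* K) : (commutator G).map φ ≤ commutator K := by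
  rw [map_commutator_eq]
  exact Subgroup.commutator_mono le_top le_top

open scoped IsMulCommutative in
theorem commutator_le_eqLocus_of_inv_mul_mem_center {φ ψ : G →* K}
    (h : ∀ x, (φ x)⁻¹ * ψ x ∈ Subgroup.center K) :
    commutator G ≤ φ.eqLocus ψ := by
  -- The difference of `φ` and `ψ` is a homomorphism to an abelian group, so it kills commutators.
  let δ : G →* Subgroup.center K := MonoidHom.mk' (fun x ↦ ⟨(φ x)⁻¹ * ψ x, h x⟩) fun x y ↦ by
    apply Subtype.ext
    calc (φ (x * y))⁻¹ * ψ (x * y)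
        = (φ y)⁻¹ * ((φ x)⁻¹ * ψ x) * ψ y := by simp only [map_mul]; group
      _ = (φ x)⁻¹ * ψ x * ((φ y)⁻¹ * ψ y) := by
          rw [Subgroup.mem_center_iff.mp (h x), mul_assoc]
  intro x hx
  have hδ : δ x = 1 := Abelianization.commutator_subset_ker δ hx
  exact inv_mul_eq_one.mp (congrArg Subtype.val hδ)

theorem le_center_of_disjoint_commutator {N : Subgroup G} [N.Normal]
    (h : Disjoint N (commutator G)) : N ≤ Subgroup.center G := by
  intro n hn
  refine Subgroup.mem_center_iff.mpr fun g ↦ (commutatorElement_eq_one_iff_mul_comm.mp ?_).symm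
  have hN : ⁅n, g⁆ ∈ N := Subgroup.commutator_le_left N ⊤
    (Subgroup.commutator_mem_commutator hn (Subgroup.mem_top g))
  exact Subgroup.disjoint_def.mp h hN
    (Subgroup.commutator_mem_commutator (Subgroup.mem_top n) (Subgroup.mem_top g))

end Commutator

section Comparison

variable {E G : Type*} [Group E] [Group G] {p : E →* G} {s : G →* E}

/-- The comparison map `e ↦ (p e, η_E e)` from `E` towards the pullback of `η_G` and `Ab(p)`. It is
an isomorphism onto this pullback exactly when `p` is a trivial extension with respect to
abelianization. As for `thetaMap`, the codomain is the ambient product. -/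
def abComparison (p : E →* G) : E →* G × Abelianization E :=
  p.prod Abelianization.of

theorem abComparison_mul_of_mem_commutator {c : E} (hc : c ∈ commutator E) (e : E) :
    abComparison p (c * e) = (p c * p e, Abelianization.of e) := by
  have hc' : Abelianization.of c = 1 := by rwa [← MonoidHom.mem_ker, Abelianization.ker_of]
  rw [abComparison, MonoidHom.prod_apply, map_mul, map_mul, hc', one_mul]

theorem range_abComparison (hp : Function.Surjective p) :
    Set.range (abComparison p) =
      {z | Abelianization.of z.1 = Abelianization.map p z.2} := by
  refine Set.Subset.antisymm (Set.range_subset_iff.mpr fun e ↦ rfl) ?_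
  rintro ⟨g, u⟩ hgu
  obtain ⟨e, rfl⟩ := QuotientGroup.mk_surjective u
  have hge : g * (p e)⁻¹ ∈ commutator G := abelianization_of_eq_iff_mul_inv_mem.mp hgu
  have hmap : (commutator E).map p = commutator G := by
    rw [map_commutator_eq, p.range_eq_top.mpr hp, commutator_def]
  obtain ⟨c, hc, hpc⟩ : ∃ c ∈ commutator E, p c = g * (p e)⁻¹ := by
    rwa [← hmap, Subgroup.mem_map] at hge
  refine ⟨c * e, ?_⟩
  rw [abComparison_mul_of_mem_commutator hc, hpc, inv_mul_cancel_right]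
  rfl

theorem abComparison_injective_iff_disjoint :
    Function.Injective (abComparison p) ↔ Disjoint p.ker (commutator E) := by
  rw [← MonoidHom.ker_eq_bot_iff, abComparison, MonoidHom.ker_prod, Abelianization.ker_of,
    disjoint_iff]

theorem disjoint_ker_commutator_of_ker_le_center (hs : Function.LeftInverse p s)
    (h : p.ker ≤ Subgroup.center E) : Disjoint p.ker (commutator E) := by
  rw [Subgroup.disjoint_def]
  intro e hpe he
  have hfix : s (p e) = e := commutator_le_eqLocus_of_inv_mul_mem_center
    (φ := s.comp p) (ψ := MonoidHom.id E) (fun x ↦ h (by simp [MonoidHom.mem_ker, hs (p x)])) he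
  rw [← hfix, MonoidHom.mem_ker.mp hpe, map_one]

theorem abComparison_injective_iff (hs : Function.LeftInverse p s) :
    Function.Injective (abComparison p) ↔ p.ker ≤ Subgroup.center E :=
  abComparison_injective_iff_disjoint.trans
    ⟨le_center_of_disjoint_commutator, disjoint_ker_commutator_of_ker_le_center hs⟩

theorem abComparison_section_mul (hs : Function.LeftInverse p s) {a : G} {e : E}
    (h : a * (p e)⁻¹ ∈ commutator G) :
    abComparison p (s (a * (p e)⁻¹) * e) = (a, Abelianization.of e) := by
  rw [abComparison_mul_of_mem_commutator (map_commutator_le s (Subgroup.mem_map_of_mem s h)),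
    hs, inv_mul_cancel_right]

theorem surjOn_abComparison_iff (hs : Function.LeftInverse p s)
    (hinj : Function.Injective (abComparison p)) (P : Set G) (Q : Set E) :
    Set.SurjOn (abComparison p) Q
        {z | z.1 ∈ P ∧ z.2 ∈ Abelianization.of '' Q ∧
          Abelianization.of z.1 = Abelianization.map p z.2} ↔
      ∀ a ∈ P, ∀ e ∈ Q, a * (p e)⁻¹ ∈ commutator G → s (a * (p e)⁻¹) * e ∈ Q := by
  constructor
  · intro hsurj a ha e he hae
    obtain ⟨x, hxQ, hx⟩ := hsurj (a := (a, Abelianization.of e))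
      ⟨ha, Set.mem_image_of_mem _ he, abelianization_of_eq_iff_mul_inv_mem.mpr hae⟩
    rwa [← hinj (hx.trans (abComparison_section_mul hs hae).symm)]
  · rintro h ⟨a, _⟩ ⟨ha, ⟨e, he, rfl⟩, hae⟩
    have hae' : a * (p e)⁻¹ ∈ commutator G := abelianization_of_eq_iff_mul_inv_mem.mp hae
    exact ⟨_, h a ha e he hae', abComparison_section_mul hs hae'⟩

end Comparison

section KernelPair

variable {G H : Type*} [Group G] [Group H] (f : G →* H)

/-- The diagonal `g ↦ (g, g)`, the section of `π₁ : Eq(f) →* G` that makes it a split extension. -/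
def kerPairDiag : G →* kerPair f :=
  ((MonoidHom.id G).prod (MonoidHom.id G)).codRestrict (kerPair f) fun _ ↦ rfl

theorem kerPairFst_leftInverse_kerPairDiag :
    Function.LeftInverse (kerPairFst f) (kerPairDiag f) :=
  fun _ ↦ rfl

theorem ker_kerPairFst_le_center_iff :
    (kerPairFst f).ker ≤ Subgroup.center (kerPair f) ↔ f.ker ≤ Subgroup.center G := by
  constructor
  · intro h k hk
    let e : kerPair f := ⟨(1, k), (map_one f).trans hk.symm⟩
    have he : e ∈ Subgroup.center (kerPair f) := h rfl
    refine Subgroup.mem_center_iff.mpr fun g ↦ ?_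
    exact congrArg (fun x ↦ x.1.2) (Subgroup.mem_center_iff.mp he (kerPairDiag f g))
  · rintro h ⟨⟨_, k⟩, hk⟩ (rfl : _ = 1)
    have hk' : k ∈ Subgroup.center G := h (hk.symm.trans (map_one f))
    refine Subgroup.mem_center_iff.mpr fun x ↦ Subtype.ext (Prod.ext ?_ ?_)
    · exact (mul_one x.1.1).trans (one_mul x.1.1).symm
    · exact Subgroup.mem_center_iff.mp hk' x.1.2

theorem thetaMap_injective_iff :
    Function.Injective (thetaMap f) ↔ f.ker ≤ Subgroup.center G :=
  (abComparison_injective_iff (kerPairFst_leftInverse_kerPairDiag f)).trans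
    (ker_kerPairFst_le_center_iff f)

theorem range_thetaMap :
    Set.range (thetaMap f) =
      {z | Abelianization.of z.1 = Abelianization.map (kerPairFst f) z.2} :=
  range_abComparison (kerPairFst_leftInverse_kerPairDiag f).surjective

variable {f}

theorem starCond_iff_kerPairDiag_mul_mem {P : Submonoid G} :
    StarCond P f ↔ ∀ a ∈ P, ∀ e ∈ kerPairCone f P, a * (kerPairFst f e)⁻¹ ∈ commutator G →
      kerPairDiag f (a * (kerPairFst f e)⁻¹) * e ∈ kerPairCone f P := by
  constructor
  · intro h a ha e he hae
    have hfst : a * (kerPairFst f e)⁻¹ * kerPairFst f e ∈ P := by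
      rwa [inv_mul_cancel_right]
    exact ⟨hfst, h a e.1.1 e.1.2 ha he.1 he.2 hae e.2⟩
  · intro h a b c ha hb hc hab hbc
    exact (h a ha ⟨(b, c), hbc⟩ ⟨hb, hc⟩ hab).2

theorem mapsTo_thetaMap_kerPairCone (P : Submonoid G) :
    Set.MapsTo (thetaMap f) (kerPairCone f P)
      {z | z.1 ∈ P ∧ z.2 ∈ Submonoid.map Abelianization.of (kerPairCone f P) ∧
        Abelianization.of z.1 = Abelianization.map (kerPairFst f) z.2} :=
  fun _ he ↦ ⟨he.1, Submonoid.mem_map_of_mem _ he, rfl⟩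

theorem bijOn_thetaMap_kerPairCone_iff (hinj : Function.Injective (thetaMap f))
    (P : Submonoid G) :
    Set.BijOn (thetaMap f) (kerPairCone f P)
        {z | z.1 ∈ P ∧ z.2 ∈ Submonoid.map Abelianization.of (kerPairCone f P) ∧
          Abelianization.of z.1 = Abelianization.map (kerPairFst f) z.2} ↔
      StarCond P f := by
  have hsurj := surjOn_abComparison_iff (kerPairFst_leftInverse_kerPairDiag f) hinj
    (P : Set G) (kerPairCone f P : Set (kerPair f))
  exact ⟨fun h ↦ starCond_iff_kerPairDiag_mul_mem.mpr (hsurj.mp h.surjOn), fun h ↦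
    ⟨mapsTo_thetaMap_kerPairCone P, hinj.injOn,
      hsurj.mpr (starCond_iff_kerPairDiag_mul_mem.mp h)⟩⟩

end KernelPair

theorem stmt7_general {G H : Type*} [Group G] [Group H] (P : Submonoid G) (f : G →* H) :
    (f.ker ≤ Subgroup.center G ∧ StarCond P f) ↔
      (Function.Injective (thetaMap f) ∧
        Set.range (thetaMap f) =
          {z : G × Abelianization ↥(kerPair f) |
            Abelianization.of z.1 = Abelianization.map (kerPairFst f) z.2} ∧
        Set.BijOn (thetaMap f) (kerPairCone f P : Set ↥(kerPair f))
          {z : G × Abelianization ↥(kerPair f) |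
            z.1 ∈ P ∧ z.2 ∈ Submonoid.map Abelianization.of (kerPairCone f P) ∧
            Abelianization.of z.1 = Abelianization.map (kerPairFst f) z.2}) := by
  rw [← thetaMap_injective_iff, and_iff_right (range_thetaMap f)]
  exact and_congr_right fun hinj ↦ (bijOn_thetaMap_kerPairCone_iff hinj P).symm

/-- a regular epimorphism `f : (G,P_G) → (H,P_H)` of preordered groups is a
normal extension for the reflection onto preordered abelian groups (expressed by the
comparison morphism `θ` towards the pullback of `η_G` along `Ab(π₁)` being an
isomorphism of preordered groups) if and only if `Ker f ⊆ Z(G)` and Condition (⋆)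
holds for `f`. -/
theorem stmt7 {G H : Type*} [Group G] [Group H]
    (PG : Submonoid G) (hPG : ∀ g : G, ∀ x ∈ PG, g * x * g⁻¹ ∈ PG)
    (PH : Submonoid H) (hPH : ∀ h : H, ∀ x ∈ PH, h * x * h⁻¹ ∈ PH)
    (f : G →* H) (hfsurj : Function.Surjective f) (hfcone : Submonoid.map f PG = PH) :
    (f.ker ≤ Subgroup.center G ∧ StarCond PG f) ↔
      (Function.Injective (thetaMap f) ∧
        Set.range (thetaMap f) =
          {z : G × Abelianization ↥(kerPair f) |
            Abelianization.of z.1 = Abelianization.map (kerPairFst f) z.2} ∧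
        Set.BijOn (thetaMap f) (kerPairCone f PG : Set ↥(kerPair f))
          {z : G × Abelianization ↥(kerPair f) |
            z.1 ∈ PG ∧ z.2 ∈ Submonoid.map Abelianization.of (kerPairCone f PG) ∧
            Abelianization.of z.1 = Abelianization.map (kerPairFst f) z.2}) :=
  stmt7_general PG f
end

section
/- A preordered group (G, P_G) is a commutative object: there exists a group homomorphism φ : G × G → G satisfying φ(x,1) = x and φ(1,y) = y for all x, y ∈ G and φ(P_G × P_G) ⊆ P_G, if and only if the group G is commutative. (Thus the commutative objects of the category of preordered groups are exactly the preordered abelian groups.) -/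
theorem commute_of_map_mk_one_of_map_one_mk {M : Type*} [MulOneClass M] {φ : M × M →* M}
    (map_mk_one : ∀ x, φ (x, 1) = x) (map_one_mk : ∀ y, φ (1, y) = y) (x y : M) :
    Commute x y := by
  have commute_images : Commute (φ (x, 1)) (φ (1, y)) := (MonoidHom.commute_inl_inr x y).map φ
  rwa [map_mk_one, map_one_mk] at commute_images

theorem exists_monoidHom_prod_apply_eq_mul {M : Type*} [Monoid M] (comm : ∀ x y : M, Commute x y) :
    ∃ φ : M × M →* M, ∀ x y, φ (x, y) = x * y :=
  ⟨(MonoidHom.id M).noncommCoprod (MonoidHom.id M) comm, fun _ _ ↦ rfl⟩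

theorem stmt8_general {M S : Type*} [Monoid M] [SetLike S M] [MulMemClass S M] (P : S) :
    (∃ φ : M × M →* M, (∀ x : M, φ (x, 1) = x) ∧ (∀ y : M, φ (1, y) = y) ∧
        ∀ p ∈ P, ∀ q ∈ P, φ (p, q) ∈ P) ↔
      ∀ x y : M, x * y = y * x := by
  constructor
  · rintro ⟨φ, map_mk_one, map_one_mk, -⟩
    exact commute_of_map_mk_one_of_map_one_mk map_mk_one map_one_mk
  · intro comm
    obtain ⟨φ, map_mk⟩ := exists_monoidHom_prod_apply_eq_mul comm
    refine ⟨φ, fun x ↦ ?_, fun y ↦ ?_, fun p hp q hq ↦ ?_⟩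
    · rw [map_mk, mul_one]
    · rw [map_mk, one_mul]
    · rw [map_mk]
      exact mul_mem hp hq

/-- a preordered group `(G, P)` is a commutative object (there is a
morphism of preordered groups `φ : (G,P) × (G,P) → (G,P)` with `φ·l_G = 1` and
`φ·r_G = 1`) if and only if the group `G` is commutative. -/
theorem stmt8 {G : Type*} [Group G]
    (P : Submonoid G) (hP : ∀ g : G, ∀ p ∈ P, g * p * g⁻¹ ∈ P) :
    (∃ φ : G × G →* G, (∀ x : G, φ (x, 1) = x) ∧ (∀ y : G, φ (1, y) = y) ∧
        ∀ p ∈ P, ∀ q ∈ P, φ (p, q) ∈ P) ↔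
      ∀ x y : G, x * y = y * x :=
  stmt8_general P
end

section
/- A preordered group (G, P_G) is an abelian object: there exists a group homomorphism φ : G × G → G satisfying φ(1,x) = x and φ(x,x) = 1 for all x ∈ G and φ(P_G × P_G) ⊆ P_G, if and only if the group G is commutative and the positive cone P_G is a subgroup of G (i.e. P_G is closed under inverses). (Thus the abelian objects of the category of preordered groups are exactly the monomorphisms of abelian groups.) -/
/-!
Since `(x, 1) * (1, x) = (x, x)`, a retraction `φ` of `x ↦ (1, x)` that kills the diagonal must
send `(x, 1)` to the inverse of `x`. As `(x, 1)` commutes with `(1, y)`, so does `x⁻¹` with `y`,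
and `φ` can only be `(x, y) ↦ x⁻¹ * y`; this preserves positivity exactly when inversion does.
-/

/-- A subtraction on `M` in the sense of unital categories: a morphism `φ : M × M → M` with
`φ ∘ r = 1` and `φ ∘ Δ = 0`, where `r x = (1, x)` and `Δ x = (x, x)`. In additive notation it is
`(x, y) ↦ y - x`. Positivity is not part of the definition. -/
structure IsSubtraction {M : Type*} [MulOneClass M] (φ : M × M →* M) : Prop where
  apply_one_left (x : M) : φ (1, x) = x
  apply_self (x : M) : φ (x, x) = 1

namespace IsSubtraction

section MulOneClass

variable {M : Type*} [MulOneClass M] {φ : M × M →* M}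

theorem apply_eq_mul (hφ : IsSubtraction φ) (x y : M) : φ (x, y) = φ (x, 1) * y := by
  calc φ (x, y) = φ ((x, 1) * (1, y)) := by rw [Prod.fst_mul_snd (x, y)]
    _ = φ (x, 1) * y := by rw [map_mul, hφ.apply_one_left]

theorem apply_one_right_mul_self (hφ : IsSubtraction φ) (x : M) : φ (x, 1) * x = 1 := by
  rw [← hφ.apply_eq_mul, hφ.apply_self]

theorem commute_apply_one_right (hφ : IsSubtraction φ) (x y : M) : Commute (φ (x, 1)) y := by
  simpa only [MonoidHom.inl_apply, MonoidHom.inr_apply, hφ.apply_one_left] using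
    (MonoidHom.commute_inl_inr x y).map φ

end MulOneClass

theorem commute {M : Type*} [Monoid M] {φ : M × M →* M} (hφ : IsSubtraction φ) (x y : M) :
    Commute x y := by
  have self_mul_apply : x * φ (x, 1) = 1 :=
    (hφ.commute_apply_one_right x x).eq.symm.trans (hφ.apply_one_right_mul_self x)
  let u : Mˣ := ⟨φ (x, 1), x, hφ.apply_one_right_mul_self x, self_mul_apply⟩
  have commute_u : Commute (u : M) y := hφ.commute_apply_one_right x y
  exact commute_u.units_inv_left

section DivisionMonoid

variable {M : Type*} [DivisionMonoid M] {φ : M × M →* M}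

theorem apply_eq_inv_mul (hφ : IsSubtraction φ) (x y : M) : φ (x, y) = x⁻¹ * y := by
  rw [hφ.apply_eq_mul, eq_inv_of_mul_eq_one_left (hφ.apply_one_right_mul_self x)]

theorem forall_apply_mem_iff (hφ : IsSubtraction φ) (P : Submonoid M) :
    (∀ p ∈ P, ∀ q ∈ P, φ (p, q) ∈ P) ↔ ∀ p ∈ P, p⁻¹ ∈ P := by
  simp only [hφ.apply_eq_inv_mul]
  constructor
  · intro inv_mul_mem p hp
    simpa only [mul_one] using inv_mul_mem p hp 1 P.one_mem
  · intro inv_mem p hp q hq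
    exact P.mul_mem (inv_mem p hp) hq

end DivisionMonoid

end IsSubtraction

theorem isSubtraction_divMonoidHom_comp_prodComm (G : Type*) [CommGroup G] :
    IsSubtraction ((divMonoidHom : G × G →* G).comp MulEquiv.prodComm.toMonoidHom) where
  apply_one_left := div_one
  apply_self := div_self'

theorem exists_isSubtraction_iff {G : Type*} [Group G] :
    (∃ φ : G × G →* G, IsSubtraction φ) ↔ ∀ x y : G, x * y = y * x := by
  constructor
  · rintro ⟨φ, hφ⟩ x y
    exact hφ.commute x y
  · intro mul_comm
    let : CommGroup G := { ‹Group G› with mul_comm }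
    exact ⟨_, isSubtraction_divMonoidHom_comp_prodComm G⟩

theorem stmt9_general {G : Type*} [Group G] (P : Submonoid G) :
    (∃ φ : G × G →* G, (∀ x : G, φ (1, x) = x) ∧ (∀ x : G, φ (x, x) = 1) ∧
        ∀ p ∈ P, ∀ q ∈ P, φ (p, q) ∈ P) ↔
      ((∀ x y : G, x * y = y * x) ∧ ∀ p ∈ P, p⁻¹ ∈ P) := by
  constructor
  · rintro ⟨φ, apply_one_left, apply_self, apply_mem⟩
    have hφ : IsSubtraction φ := ⟨apply_one_left, apply_self⟩
    exact ⟨exists_isSubtraction_iff.mp ⟨φ, hφ⟩, (hφ.forall_apply_mem_iff P).mp apply_mem⟩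
  · rintro ⟨mul_comm, inv_mem⟩
    obtain ⟨φ, hφ⟩ := exists_isSubtraction_iff.mpr mul_comm
    exact ⟨φ, hφ.apply_one_left, hφ.apply_self, (hφ.forall_apply_mem_iff P).mpr inv_mem⟩

/-- a preordered group `(G, P)` is an abelian object (there is a
morphism of preordered groups `φ : (G,P) × (G,P) → (G,P)` with `φ·r_G = 1` and
`φ·Δ_G = 0`) if and only if the group `G` is commutative and the positive cone
`P` is a subgroup of `G`. -/
theorem stmt9 {G : Type*} [Group G]
    (P : Submonoid G) (hP : ∀ g : G, ∀ p ∈ P, g * p * g⁻¹ ∈ P) :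
    (∃ φ : G × G →* G, (∀ x : G, φ (1, x) = x) ∧ (∀ x : G, φ (x, x) = 1) ∧
        ∀ p ∈ P, ∀ q ∈ P, φ (p, q) ∈ P) ↔
      ((∀ x y : G, x * y = y * x) ∧ ∀ p ∈ P, p⁻¹ ∈ P) :=
  stmt9_general P
end

section
/- Let f : (G, P_G) → (H, P_H) be a regular epimorphism of preordered groups, let Eq(f)⁺ = {(x,y) ∈ P_G × P_G : f(x) = f(y)} be the positive cone of the kernel pair, with first projection π₁ : Eq(f)⁺ → P_G, diagonal section Δ(x) = (x,x), and K = {(1,k) : k ∈ P_G, f(k) = 1} the kernel of π₁. The following are equivalent: (a) the restriction of f to the positive cones is a special homogeneous surjection of monoids, i.e. for every x ∈ P_G both maps K → π₁⁻¹(x) given by (1,k) ↦ (1,k)·Δ(x) = (x, k·x) and (1,k) ↦ Δ(x)·(1,k) = (x, x·k) are bijective; (b) for all x, y ∈ P_G with f(x) = f(y), one has y·x⁻¹ ∈ P_G and x⁻¹·y ∈ P_G. -/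
/-! Translation by `(x, x)` is a permutation of `G × G` which, for `x` in the cone, carries the
kernel of `π₁` into the fiber over `x`. It is therefore bijective between the two exactly when the
inverse translation carries the fiber back into the kernel. As `(x, y) * (x, x)⁻¹ = (1, y * x⁻¹)`
and `(x, x)⁻¹ * (x, y) = (1, x⁻¹ * y)`, this says that the quotients lie in the cone. -/

open Set

theorem bijOn_iff_mapsTo_symm {α β : Type*} {s : Set α} {t : Set β} (e : α ≃ β)
    (h : MapsTo e s t) : BijOn e s t ↔ MapsTo e.symm t s :=
  ⟨fun hbij => (e.bijOn_symm.2 hbij).mapsTo, e.bijOn' h⟩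

/-- The fiber over `x` of the first projection `π₁ : Eq(f)⁺ → P` from the positive cone of the
kernel pair of `f`. It is cut out of `G × G` to make the translation maps restrictions of
translations of `G × G`; the kernel of `π₁` is the fiber over `1`. -/
def kernelPairFiber {G M S : Type*} [MulOneClass G] [MulOneClass M] [SetLike S G]
    (P : S) (f : G →* M) (x : G) : Set (G × G) :=
  {z | z.1 = x ∧ z.2 ∈ P ∧ f z.2 = f x}

namespace kernelPairFiber

section MulOneClass

variable {G M S : Type*} [MulOneClass G] [MulOneClass M] [SetLike S G] [MulMemClass S G]
  {P : S} {x : G}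

theorem mapsTo_mul_right (f : G →* M) (hx : x ∈ P) (a : G) :
    MapsTo (· * (x, x)) (kernelPairFiber P f a) (kernelPairFiber P f (a * x)) := by
  rintro ⟨_, b⟩ ⟨rfl, hb, hfb⟩
  exact ⟨rfl, mul_mem hb hx, by simp only [Prod.snd_mul, map_mul, hfb]⟩

theorem mapsTo_mul_left (f : G →* M) (hx : x ∈ P) (a : G) :
    MapsTo ((x, x) * ·) (kernelPairFiber P f a) (kernelPairFiber P f (x * a)) := by
  rintro ⟨_, b⟩ ⟨rfl, hb, hfb⟩
  exact ⟨rfl, mul_mem hx hb, by simp only [Prod.snd_mul, map_mul, hfb]⟩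

end MulOneClass

section Group

variable {G M S : Type*} [Group G] [MulOneClass M] [SetLike S G]

theorem mapsTo_mul_inv_right_iff (P : S) (f : G →* M) (x : G) :
    MapsTo (· * (x, x)⁻¹) (kernelPairFiber P f x) (kernelPairFiber P f 1) ↔
      ∀ y ∈ P, f x = f y → y * x⁻¹ ∈ P := by
  constructor
  · intro h y hy hxy
    exact (@h (x, y) ⟨rfl, hy, hxy.symm⟩).2.1
  · rintro h ⟨a, y⟩ ⟨rfl, hy, hya : f y = f a⟩
    refine ⟨mul_inv_cancel a, h y hy hya.symm, ?_⟩
    calc f (y * a⁻¹) = f a * f a⁻¹ := by rw [map_mul, hya]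
      _ = f 1 := by rw [← map_mul, mul_inv_cancel]

theorem mapsTo_mul_inv_left_iff (P : S) (f : G →* M) (x : G) :
    MapsTo ((x, x)⁻¹ * ·) (kernelPairFiber P f x) (kernelPairFiber P f 1) ↔
      ∀ y ∈ P, f x = f y → x⁻¹ * y ∈ P := by
  constructor
  · intro h y hy hxy
    exact (@h (x, y) ⟨rfl, hy, hxy.symm⟩).2.1
  · rintro h ⟨a, y⟩ ⟨rfl, hy, hya : f y = f a⟩
    refine ⟨inv_mul_cancel a, h y hy hya.symm, ?_⟩
    calc f (a⁻¹ * y) = f a⁻¹ * f a := by rw [map_mul, hya]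
      _ = f 1 := by rw [← map_mul, inv_mul_cancel]

variable [MulMemClass S G] {P : S} {x : G}

theorem bijOn_mul_right_iff (f : G →* M) (hx : x ∈ P) :
    BijOn (· * (x, x)) (kernelPairFiber P f 1) (kernelPairFiber P f x) ↔
      ∀ y ∈ P, f x = f y → y * x⁻¹ ∈ P := by
  have hmaps := mapsTo_mul_right f hx 1
  rw [one_mul] at hmaps
  exact (bijOn_iff_mapsTo_symm (Equiv.mulRight (x, x)) hmaps).trans
    (mapsTo_mul_inv_right_iff P f x)

theorem bijOn_mul_left_iff (f : G →* M) (hx : x ∈ P) :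
    BijOn ((x, x) * ·) (kernelPairFiber P f 1) (kernelPairFiber P f x) ↔
      ∀ y ∈ P, f x = f y → x⁻¹ * y ∈ P := by
  have hmaps := mapsTo_mul_left f hx 1
  rw [mul_one] at hmaps
  exact (bijOn_iff_mapsTo_symm (Equiv.mulLeft (x, x)) hmaps).trans
    (mapsTo_mul_inv_left_iff P f x)

end Group

end kernelPairFiber

open kernelPairFiber in
theorem stmt12_general {G M S : Type*} [Group G] [MulOneClass M] [SetLike S G] [MulMemClass S G]
    (P : S) (f : G →* M) :
    (∀ x ∈ P,
        BijOn (· * (x, x)) (kernelPairFiber P f 1) (kernelPairFiber P f x) ∧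
        BijOn ((x, x) * ·) (kernelPairFiber P f 1) (kernelPairFiber P f x)) ↔
      ∀ x ∈ P, ∀ y ∈ P, f x = f y → y * x⁻¹ ∈ P ∧ x⁻¹ * y ∈ P := by
  refine forall₂_congr fun x hx => ?_
  rw [bijOn_mul_right_iff f hx, bijOn_mul_left_iff f hx]
  simp only [← forall_and]

/-- for a regular epimorphism of preordered groups
`f : (G,P_G) → (H,P_H)`, the restriction of `f` to the positive cones is a special
homogeneous surjection of monoids (for every `x ∈ P_G` the two translation maps from
the kernel `K = {(1,k) | k ∈ P_G, f k = 1}` of `π₁ : Eq(f)⁺ → P_G` to the fiber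
`π₁⁻¹(x)` are bijective) if and only if for all `x, y ∈ P_G` with `f x = f y`
one has `y·x⁻¹ ∈ P_G` and `x⁻¹·y ∈ P_G`. -/
theorem stmt12 {G H : Type*} [Group G] [Group H]
    (PG : Submonoid G) (hPG : ∀ g : G, ∀ x ∈ PG, g * x * g⁻¹ ∈ PG)
    (PH : Submonoid H) (hPH : ∀ h : H, ∀ x ∈ PH, h * x * h⁻¹ ∈ PH)
    (f : G →* H) (hfsurj : Function.Surjective f) (hfcone : Submonoid.map f PG = PH) :
    (∀ x ∈ PG,
        Set.BijOn (fun z : G × G => z * (x, x))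
          {z : G × G | z.1 = 1 ∧ z.2 ∈ PG ∧ f z.2 = 1}
          {z : G × G | z.1 = x ∧ z.2 ∈ PG ∧ f z.2 = f x} ∧
        Set.BijOn (fun z : G × G => (x, x) * z)
          {z : G × G | z.1 = 1 ∧ z.2 ∈ PG ∧ f z.2 = 1}
          {z : G × G | z.1 = x ∧ z.2 ∈ PG ∧ f z.2 = f x}) ↔
      ∀ x ∈ PG, ∀ y ∈ PG, f x = f y → y * x⁻¹ ∈ PG ∧ x⁻¹ * y ∈ PG := by
  simpa only [kernelPairFiber, map_one] using stmt12_general PG f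
end

section
/- Let (G, P_G) be a preordered group, A an abelian group, Q ⊆ A a subgroup, and f : G → A a group homomorphism with f(P_G) ⊆ Q. Then there exists a unique group homomorphism g : G/[G,G] → A with g ∘ η_G = f, and this g moreover maps the subgroup D_G = {η_G(a)·η_G(b)⁻¹ : a, b ∈ P_G} of G/[G,G] into Q. (Thus (G/[G,G], D_G) is the reflection of (G, P_G) into the category of monomorphisms of abelian groups, i.e. into the abelian objects of preordered groups.) -/
theorem existsUnique_comp_abelianization_of_eq {G A : Type*} [Group G] [CommGroup A]
    (f : G →* A) : ∃! g : Abelianization G →* A, g.comp Abelianization.of = f :=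
  Abelianization.lift.symm.bijective.existsUnique f

theorem closure_image_le_comap_iff {G H K : Type*} [Group G] [Group H] [Group K]
    (π : G →* H) (g : H →* K) (S : Set G) (Q : Subgroup K) :
    Subgroup.closure (π '' S) ≤ Q.comap g ↔ ∀ s ∈ S, g.comp π s ∈ Q :=
  (Subgroup.closure_le _).trans Set.image_subset_iff

theorem mul_inv_mem_closure_image {G H : Type*} [Group G] [Group H] (π : G →* H)
    {S : Set G} {a b : G} (ha : a ∈ S) (hb : b ∈ S) :
    π a * (π b)⁻¹ ∈ Subgroup.closure (π '' S) :=
  mul_mem (Subgroup.subset_closure (Set.mem_image_of_mem π ha))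
    (inv_mem (Subgroup.subset_closure (Set.mem_image_of_mem π hb)))

theorem stmt14_general {G A : Type*} [Group G] [CommGroup A]
    (S : Set G) (Q : Subgroup A) (f : G →* A) (hf : ∀ s ∈ S, f s ∈ Q) :
    (∃! g : Abelianization G →* A, g.comp Abelianization.of = f) ∧
      ∀ g : Abelianization G →* A, g.comp Abelianization.of = f →
        Subgroup.closure (Abelianization.of '' S) ≤ Q.comap g := by
  refine ⟨existsUnique_comp_abelianization_of_eq f, ?_⟩
  rintro g rfl
  exact (closure_image_le_comap_iff Abelianization.of g S Q).2 hf

/-- the reflection of a preordered group `(G, P)` into the category of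
monomorphisms of abelian groups (the abelian objects of preordered groups): a morphism
`f` to an abelian group `A` carrying `P` into a subgroup `Q ≤ A` factors uniquely
through `η_G : G → G/[G,G]`, and the factorization carries the subgroup of differences
`D_G = {η_G(a)·η_G(b)⁻¹ : a, b ∈ P}` into `Q`. -/
theorem stmt14 {G A : Type*} [Group G] [CommGroup A]
    (P : Submonoid G) (hP : ∀ g : G, ∀ p ∈ P, g * p * g⁻¹ ∈ P)
    (Q : Subgroup A) (f : G →* A) (hf : ∀ p ∈ P, f p ∈ Q) :
    (∃! g : Abelianization G →* A, g.comp Abelianization.of = f) ∧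
      ∀ g : Abelianization G →* A, g.comp Abelianization.of = f →
        ∀ a ∈ P, ∀ b ∈ P,
          g (Abelianization.of a * (Abelianization.of b)⁻¹) ∈ Q := by
  obtain ⟨exists_unique, closure_le⟩ := stmt14_general (P : Set G) Q f hf
  exact ⟨exists_unique, fun g hg _ ha _ hb => closure_le g hg (mul_inv_mem_closure_image _ ha hb)⟩
end
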